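/- Let X = A_m with m ≥ 5. Then the symmetric cube of the adjoint module decomposes as: S^3(V_X(ω_1+ω_m)) = V_X(3ω_1+3ω_m) ⊕ V_X(2ω_1+2ω_m) ⊕ V_X(ω_1+ω_m)^{⊕2} ⊕ V_X(ω_2+ω_{m−1}) ⊕ V_X(ω_3+ω_{m−2}) ⊕ V_X(ω_1+ω_2+ω_{m−1}+ω_m) ⊕ V_X(2ω_1+ω_{m−1}) ⊕ V_X(ω_2+2ω_m) ⊕ V_X(0), where for m = 5 the term V_X(ω_3+ω_{m−2}) is V_X(2ω_3). In particular, S^3(V_X(ω_1+ω_m)) is not multiplicity-free, containing V_X(ω_1+ω_m) with multiplicity exactly 2. -/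

import Mathlib

/-!
# Common framework

Over an algebraically closed field of characteristic zero, finite–dimensional rational
representations of a simple algebraic group are semisimple and are determined by their
formal characters, i.e. by elements of the group ring of the (rational) weight lattice;
the character of the irreducible module of highest weight `λ` is pinned down by the
Weyl character formula `A_ρ · χ_λ = A_{λ+ρ}`.

Below we model, completely combinatorially:

* type `A_r` : weights are realised by their traceless representatives in `Fin (r+1) → ℚ`
  (the `gl`-coordinates), and the Weyl group is the symmetric group;
* types `B_n, C_n, D_n` : weights are realised in the standard `ε`-coordinates
  `Fin n → ℚ`, and the Weyl group consists of (signed) permutations, with evenly many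
  sign changes in type `D`;
* an embedding `X = A_r < Y` (classical of type `t` and rank `n`) in which `X` acts on
  the natural module `W` of `Y` irreducibly with highest weight `δ` : the weights of `W`
  are `± w i` (plus one zero weight in type `B`), and restriction of characters is induced
  by the map `v ↦ ∑ i, v i • w i` of weight lattices;
* `IsMFRes t n r δ lam` : the restriction to `X` of the irreducible `Y`-module with
  highest weight `lam` is multiplicity-free, i.e. its character is a sum of distinct
  irreducible characters of `X`.

Dominant weights are always recorded by their (natural number) coordinates in the basis
of fundamental weights, `e n k` being the `k`-th fundamental weight (1-indexed).
-/

noncomputable section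

namespace MFPaper

/-- The Dynkin type of a classical group `B_n = SO_{2n+1}`, `C_n = Sp_{2n}`, `D_n = SO_{2n}`. -/
inductive CType | B | C | D
deriving DecidableEq

/-- The character ring: the integral group ring of a rational weight space
with `k` coordinates. -/
abbrev CharRing (k : ℕ) : Type := AddMonoidAlgebra ℤ (Fin k → ℚ)

/-- The formal exponential `e^v` of a weight `v`. -/
def mono {k : ℕ} (v : Fin k → ℚ) : CharRing k := AddMonoidAlgebra.single v 1

/-- `e n k` : the `k`-th fundamental dominant weight (`1 ≤ k ≤ n`, 1-indexed) of a rank `n`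
group, recorded by its coordinates in the basis of fundamental weights. -/
def e (n k : ℕ) : Fin n → ℕ := fun i => if (i : ℕ) + 1 = k then 1 else 0

/-! ### Type `A_r` -/

/-- The partition (`gl`) lift of the dominant weight of `A_r` with coordinates `d`
in the basis of fundamental weights. -/
def partLift (r : ℕ) (d : Fin r → ℕ) : Fin (r + 1) → ℚ := fun i =>
  ∑ j ∈ Finset.univ.filter (fun j : Fin r => (i : ℕ) ≤ (j : ℕ)), (d j : ℚ)

/-- The traceless (`sl`) representative of the dominant weight of `A_r` with coordinates `d`. -/
def slWt (r : ℕ) (d : Fin r → ℕ) : Fin (r + 1) → ℚ := fun i =>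
  partLift r d i - (∑ j : Fin r, (((j : ℕ) : ℚ) + 1) * (d j : ℚ)) / (r + 1)

/-- A lift of the half-sum of the positive roots of `A_r`. -/
def rhoA (r : ℕ) : Fin (r + 1) → ℚ := fun i => (r : ℚ) - (i : ℕ)

/-- The Weyl alternating sum `A_v = ∑_{σ} sgn(σ) e^{σ v}` for type `A_r`. -/
def altA (r : ℕ) (v : Fin (r + 1) → ℚ) : CharRing (r + 1) :=
  ∑ σ : Equiv.Perm (Fin (r + 1)),
    ((Equiv.Perm.sign σ : ℤˣ) : ℤ) • mono (fun i => v (σ i))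

/-- `IsCharA r d f` : `f` is the formal character of the irreducible `A_r`-module
of highest weight `d` (Weyl character formula). -/
def IsCharA (r : ℕ) (d : Fin r → ℕ) (f : CharRing (r + 1)) : Prop :=
  altA r (rhoA r) * f = altA r (slWt r d + rhoA r)

/-- `Decomp r F c` : the character `F` of a representation of `A_r` decomposes as
`∑_μ (c μ) · χ_μ`, i.e. the irreducible of highest weight `μ` occurs in it as a
composition factor with multiplicity `c μ`. -/
def Decomp (r : ℕ) (F : CharRing (r + 1)) (c : (Fin r → ℕ) →₀ ℕ) : Prop :=
  F * altA r (rhoA r) = c.sum fun μ k => (k : ℤ) • altA r (slWt r μ + rhoA r)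

/-- The Weyl dimension formula for type `A_r`. -/
def dimA (r : ℕ) (d : Fin r → ℕ) : ℚ :=
  ∏ p ∈ Finset.univ.filter (fun p : Fin (r + 1) × Fin (r + 1) => (p.1 : ℕ) < (p.2 : ℕ)),
    ((partLift r d p.1 - partLift r d p.2 + ((p.2 : ℕ) : ℚ) - ((p.1 : ℕ) : ℚ)) /
      (((p.2 : ℕ) : ℚ) - ((p.1 : ℕ) : ℚ)))

/-- The self-dual irreducible `A_r`-module of highest weight `d` is *symplectic*
(it carries an invariant alternating form); by Steinberg's criterion this happens
exactly when `⟨d, 2ρ^∨⟩ = ∑ d_k · k(r+1-k)` is odd. -/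
def IsSympWt (r : ℕ) (d : Fin r → ℕ) : Prop :=
  Odd (∑ i : Fin r, d i * ((i : ℕ) + 1) * (r - (i : ℕ)))

/-! ### The classical types `B`, `C`, `D` -/

/-- Convenient access to the `k`-th (0-indexed) coordinate. -/
def cval {n : ℕ} (c : Fin n → ℕ) (k : ℕ) : ℚ := if h : k < n then (c ⟨k, h⟩ : ℚ) else 0

/-- `ε`-coordinates of the dominant weight of the classical group of type `t` and rank `n`
with coordinates `c` in the basis of fundamental weights (Bourbaki numbering). -/
def epsWt (t : CType) (n : ℕ) (c : Fin n → ℕ) : Fin n → ℚ := fun i =>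
  (∑ k ∈ Finset.univ.filter (fun k : Fin n => (i : ℕ) ≤ (k : ℕ)), (c k : ℚ)) -
    (match t with
      | .C => 0
      | .B => cval c (n - 1) / 2
      | .D => (cval c (n - 2) + cval c (n - 1)) / 2)

/-- The half-sum of the positive roots in `ε`-coordinates. -/
def rhoY (t : CType) (n : ℕ) : Fin n → ℚ := fun i =>
  match t with
  | .C => (n : ℚ) - (i : ℕ)
  | .B => (n : ℚ) - (i : ℕ) - 1 / 2
  | .D => (n : ℚ) - 1 - (i : ℕ)

/-- The Weyl alternating sum for the classical group of type `t` and rank `n`: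
the Weyl group consists of the signed permutations of the coordinates,
with evenly many sign changes in type `D`. -/
def altY (t : CType) (n : ℕ) (v : Fin n → ℚ) : CharRing n :=
  ∑ σ : Equiv.Perm (Fin n), ∑ s : Fin n → Bool,
    if t = CType.D ∧ ¬ Even (Finset.univ.filter (fun i => s i = true)).card then 0
    else (((Equiv.Perm.sign σ : ℤˣ) : ℤ) *
          (-1) ^ (Finset.univ.filter (fun i => s i = true)).card) •
      mono (fun i => (if s i then -1 else 1) * v (σ i))

/-- `IsCharY t n c f` : `f` is the formal character of the irreducible module of highest
weight `c` for the classical group of type `t` and rank `n` (Weyl character formula). -/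
def IsCharY (t : CType) (n : ℕ) (c : Fin n → ℕ) (f : CharRing n) : Prop :=
  altY t n (rhoY t n) * f = altY t n (epsWt t n c + rhoY t n)

/-! ### The embedding `X = A_r < Y` via `δ`, and restriction of characters -/

/-- `WtSys t n r δ w` : `w` lists "half" of the weights of the natural module
`W = V_X(δ)` of the classical group `Y` of type `t` and rank `n`, for `X = A_r`:
the weights of `W` (with multiplicity) are exactly the `± w i`, together with one
extra zero weight in type `B`.  Such a `w` records a maximal torus embedding
`T_X → T_Y` realising the irreducible embedding `X < Y = SO(W)` or `Sp(W)` given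
by the representation of highest weight `δ`. -/
def WtSys (t : CType) (n r : ℕ) (δ : Fin r → ℕ)
    (w : Fin n → (Fin (r + 1) → ℚ)) : Prop :=
  ((∑ i : Fin n, (mono (w i) + mono (-(w i)))) +
      (if t = CType.B then mono (0 : Fin (r + 1) → ℚ) else 0)) * altA r (rhoA r)
    = altA r (slWt r δ + rhoA r)

/-- Restriction of characters from `Y` to `X = A_r` along the torus embedding
recorded by `w`. -/
def resChar {n r : ℕ} (w : Fin n → (Fin (r + 1) → ℚ)) (F : CharRing n) :
    CharRing (r + 1) :=
  AddMonoidAlgebra.mapDomain (fun v : Fin n → ℚ => ∑ i : Fin n, v i • w i) F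

/-- `IsMFRes t n r δ lam` : in the embedding `X = A_r < Y` (the classical group of type
`t` and rank `n`) given by the irreducible representation of highest weight `δ`, the
restriction to `X` of the irreducible `Y`-module of highest weight `lam` is
multiplicity-free: its character is a sum of *distinct* irreducible characters of `X`. -/
def IsMFRes (t : CType) (n r : ℕ) (δ : Fin r → ℕ) (lam : Fin n → ℕ) : Prop :=
  ∀ w, WtSys t n r δ w → ∀ f, IsCharY t n lam f →
    ∃ c : (Fin r → ℕ) →₀ ℕ, Decomp r (resChar w f) c ∧ ∀ μ, c μ ≤ 1

/-- The operation `e^v ↦ e^{k·v}` on characters (Adams operation on the torus),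
used to express symmetric and exterior powers of characters. -/
def pw {m : ℕ} (k : ℕ) (F : CharRing m) : CharRing m :=
  AddMonoidAlgebra.mapDomain (fun v : Fin m → ℚ => (k : ℚ) • v) F

/-- The irreducible `A_r`-module of highest weight `d` carries a nonzero invariant
*symmetric* bilinear form, i.e. the trivial module occurs in its symmetric square
(whose character `S` satisfies `2S = f² + f^{[2]}`). -/
def HasSymForm (r : ℕ) (d : Fin r → ℕ) : Prop :=
  ∀ f, IsCharA r d f →
    ∃ c : (Fin r → ℕ) →₀ ℕ,
      (f * f + pw 2 f) * altA r (rhoA r)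
          = c.sum (fun μ k => ((2 * k : ℕ) : ℤ) • altA r (slWt r μ + rhoA r)) ∧ 1 ≤ c 0

/-- The irreducible `A_r`-module of highest weight `d` carries a nonzero invariant
*alternating* bilinear form, i.e. the trivial module occurs in its exterior square
(whose character `Λ` satisfies `2Λ = f² - f^{[2]}`). -/
def HasAltForm (r : ℕ) (d : Fin r → ℕ) : Prop :=
  ∀ f, IsCharA r d f →
    ∃ c : (Fin r → ℕ) →₀ ℕ,
      (f * f - pw 2 f) * altA r (rhoA r)
          = c.sum (fun μ k => ((2 * k : ℕ) : ℤ) • altA r (slWt r μ + rhoA r)) ∧ 1 ≤ c 0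

end MFPaper

namespace MFPaper

lemma mono_mul {k : ℕ} (v w : Fin k → ℚ) : mono v * mono w = mono (v + w) := by
  simp [mono, AddMonoidAlgebra.single_mul_single]

lemma two_tf {k : ℕ} (x : CharRing k) (h : x = -x) : x = 0 := by
  ext v
  have h1 := congrArg (fun y : CharRing k => y.coeff v) h
  simp at h1
  simp
  omega

lemma altA_perm (r : ℕ) (v : Fin (r+1) → ℚ) (τ : Equiv.Perm (Fin (r+1))) :
    altA r (fun i => v (τ i)) = ((Equiv.Perm.sign τ : ℤˣ) : ℤ) • altA r v := by
  unfold altA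
  rw [Finset.smul_sum]
  conv_rhs => rw [← Equiv.sum_comp (Equiv.mulLeft τ)]
  refine Finset.sum_congr rfl fun σ _ => ?_
  rw [smul_smul]
  simp only [Equiv.coe_mulLeft, Equiv.Perm.sign_mul, Units.val_mul, ← mul_assoc,
    Equiv.Perm.mul_apply]
  rcases Int.units_eq_one_or (Equiv.Perm.sign τ) with h | h <;> simp [h]

lemma altA_swap (r : ℕ) (v w : Fin (r+1) → ℚ) (i j : Fin (r+1)) (hij : i ≠ j)
    (h1 : w i = v j) (h2 : w j = v i) (h3 : ∀ k, k ≠ i → k ≠ j → w k = v k) :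
    altA r w = - altA r v := by
  have : w = fun k => v (Equiv.swap i j k) := by
    funext k
    by_cases hi : k = i
    · subst hi; simp [h1]
    by_cases hj : k = j
    · subst hj; simp [h2]
    rw [Equiv.swap_apply_of_ne_of_ne hi hj, h3 k hi hj]
  rw [this, altA_perm, Equiv.Perm.sign_swap hij]; simp

lemma altA_zero (r : ℕ) (v : Fin (r+1) → ℚ) (i j : Fin (r+1)) (hij : i ≠ j)
    (h : v i = v j) : altA r v = 0 :=
  two_tf _ (altA_swap r v v i j hij h h.symm fun _ _ _ => rfl)

/-- power sums -/
def PS (r : ℕ) (c : ℚ) : CharRing (r+1) := ∑ i, mono (Pi.single i c)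

lemma altA_mul_PS (r : ℕ) (v : Fin (r+1) → ℚ) (c : ℚ) :
    altA r v * PS r c = ∑ i, altA r (v + Pi.single i c) := by
  unfold altA PS
  rw [Finset.sum_mul, Finset.sum_comm]
  refine Finset.sum_congr rfl fun σ _ => ?_
  rw [Finset.mul_sum]
  conv_rhs => rw [← Equiv.sum_comp σ]
  refine Finset.sum_congr rfl fun i _ => ?_
  rw [smul_mul_assoc, mono_mul]
  congr 2
  funext k
  simp [Pi.single_apply]

def lam (m : ℕ) (a1 a2 a3 b1 b2 b3 : ℚ) : Fin (m+1) → ℚ := fun i =>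
  if i.val = 0 then a1 else if i.val = 1 then a2 else if i.val = 2 then a3 else
  if i.val = m then -b1 else if i.val + 1 = m then -b2 else if i.val + 2 = m then -b3 else 0

def L (m : ℕ) (a1 a2 a3 b1 b2 b3 : ℚ) : CharRing (m+1) :=
  altA m (lam m a1 a2 a3 b1 b2 b3 + rhoA m)

variable {m : ℕ} (hm : 5 ≤ m) (a1 a2 a3 b1 b2 b3 : ℚ)

lemma lam_s0 (c : ℚ) (hp) :
    lam m a1 a2 a3 b1 b2 b3 + Pi.single ⟨0, hp⟩ c = lam m (a1+c) a2 a3 b1 b2 b3 := by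
  funext i
  by_cases h : i = ⟨0, hp⟩
  · subst h
    have : 0 + 0 ≤ m := by omega
    simp only [lam, Pi.add_apply, Pi.single_eq_same]
    split_ifs <;> first | (exfalso; omega) | ring
  · rw [Pi.add_apply, Pi.single_eq_of_ne h]
    have h' : i.val ≠ 0 := fun h1 => h (Fin.ext h1)
    simp only [lam, add_zero]
    split_ifs <;> first | rfl | (exfalso; omega)

lemma lam_s1 (c : ℚ) (hp) :
    lam m a1 a2 a3 b1 b2 b3 + Pi.single ⟨1, hp⟩ c = lam m a1 (a2+c) a3 b1 b2 b3 := by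
  funext i
  by_cases h : i = ⟨1, hp⟩
  · subst h
    have : 1 + 0 ≤ m := by omega
    simp only [lam, Pi.add_apply, Pi.single_eq_same]
    split_ifs <;> first | (exfalso; omega) | ring
  · rw [Pi.add_apply, Pi.single_eq_of_ne h]
    have h' : i.val ≠ 1 := fun h1 => h (Fin.ext h1)
    simp only [lam, add_zero]
    split_ifs <;> first | rfl | (exfalso; omega)

lemma lam_s2 (c : ℚ) (hp) :
    lam m a1 a2 a3 b1 b2 b3 + Pi.single ⟨2, hp⟩ c = lam m a1 a2 (a3+c) b1 b2 b3 := by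
  funext i
  by_cases h : i = ⟨2, hp⟩
  · subst h
    have : 2 + 0 ≤ m := by omega
    simp only [lam, Pi.add_apply, Pi.single_eq_same]
    split_ifs <;> first | (exfalso; omega) | ring
  · rw [Pi.add_apply, Pi.single_eq_of_ne h]
    have h' : i.val ≠ 2 := fun h1 => h (Fin.ext h1)
    simp only [lam, add_zero]
    split_ifs <;> first | rfl | (exfalso; omega)

lemma lam_sm (hm : 5 ≤ m) (c : ℚ) (hp) :
    lam m a1 a2 a3 b1 b2 b3 + Pi.single ⟨m, hp⟩ c = lam m a1 a2 a3 (b1-c) b2 b3 := by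
  funext i
  by_cases h : i = ⟨m, hp⟩
  · subst h
    have : m + 0 ≤ m := by omega
    simp only [lam, Pi.add_apply, Pi.single_eq_same]
    split_ifs <;> first | (exfalso; omega) | ring
  · rw [Pi.add_apply, Pi.single_eq_of_ne h]
    have h' : i.val ≠ m := fun h1 => h (Fin.ext h1)
    simp only [lam, add_zero]
    split_ifs <;> first | rfl | (exfalso; omega)

lemma lam_sm1 (hm : 5 ≤ m) (c : ℚ) (hp) :
    lam m a1 a2 a3 b1 b2 b3 + Pi.single ⟨m-1, hp⟩ c = lam m a1 a2 a3 b1 (b2-c) b3 := by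
  funext i
  by_cases h : i = ⟨m-1, hp⟩
  · subst h
    have : m-1 + 0 ≤ m := by omega
    simp only [lam, Pi.add_apply, Pi.single_eq_same]
    split_ifs <;> first | (exfalso; omega) | ring
  · rw [Pi.add_apply, Pi.single_eq_of_ne h]
    have h' : i.val ≠ m-1 := fun h1 => h (Fin.ext h1)
    simp only [lam, add_zero]
    split_ifs <;> first | rfl | (exfalso; omega)

lemma lam_sm2 (hm : 5 ≤ m) (c : ℚ) (hp) :
    lam m a1 a2 a3 b1 b2 b3 + Pi.single ⟨m-2, hp⟩ c = lam m a1 a2 a3 b1 b2 (b3-c) := by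
  funext i
  by_cases h : i = ⟨m-2, hp⟩
  · subst h
    have : m-2 + 2 = m := by omega
    simp only [lam, Pi.add_apply, Pi.single_eq_same]
    split_ifs <;> first | (exfalso; omega) | ring
  · rw [Pi.add_apply, Pi.single_eq_of_ne h]
    have h' : i.val ≠ m-2 := fun h1 => h (Fin.ext h1)
    simp only [lam, add_zero]
    split_ifs <;> first | rfl | (exfalso; omega)

lemma L_mul (c : ℚ) (hz : ∀ i : Fin (m+1), 3 ≤ i.val → i.val + 3 ≤ m →
      altA m (lam m a1 a2 a3 b1 b2 b3 + rhoA m + Pi.single i c) = 0) (hm : 5 ≤ m) :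
    L m a1 a2 a3 b1 b2 b3 * PS m c =
      L m (a1+c) a2 a3 b1 b2 b3 + L m a1 (a2+c) a3 b1 b2 b3 + L m a1 a2 (a3+c) b1 b2 b3
      + L m a1 a2 a3 (b1-c) b2 b3 + L m a1 a2 a3 b1 (b2-c) b3 + L m a1 a2 a3 b1 b2 (b3-c) := by
  unfold L
  rw [altA_mul_PS]
  set F : Fin (m+1) → CharRing (m+1) := fun i =>
    altA m (lam m a1 a2 a3 b1 b2 b3 + rhoA m + Pi.single i c) with hF
  have key : ∑ i, F i = ∑ i ∈ ({⟨0, by omega⟩, ⟨1, by omega⟩, ⟨2, by omega⟩, ⟨m, by omega⟩,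
      ⟨m-1, by omega⟩, ⟨m-2, by omega⟩} : Finset (Fin (m+1))), F i := by
    symm
    apply Finset.sum_subset (Finset.subset_univ _)
    intro i _ hi
    simp only [Finset.mem_insert, Finset.mem_singleton, Fin.ext_iff, not_or] at hi
    exact hz i (by omega) (by omega)
  have h6 : ∑ i, F i = F ⟨0, by omega⟩ + F ⟨1, by omega⟩ + F ⟨2, by omega⟩ + F ⟨m, by omega⟩ +
      F ⟨m-1, by omega⟩ + F ⟨m-2, by omega⟩ := by
    rw [key, Finset.sum_insert, Finset.sum_insert, Finset.sum_insert, Finset.sum_insert,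
      Finset.sum_insert, Finset.sum_singleton]
    · ring
    all_goals
      simp only [Finset.mem_insert, Finset.mem_singleton, Fin.ext_iff, not_or]
      omega
  rw [h6]
  simp only [hF, add_right_comm _ (rhoA m)]
  rw [lam_s0, lam_s1, lam_s2, lam_sm (hm := hm), lam_sm1 (hm := hm), lam_sm2 (hm := hm)]

include hm in
lemma L_sw12 : L m a1 a2 a3 b1 b2 b3 = - L m (a2-1) (a1+1) a3 b1 b2 b3 := by
  unfold L
  apply altA_swap m _ _ ⟨0, by omega⟩ ⟨1, by omega⟩ (by simp [Fin.ext_iff])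
  · simp [lam, rhoA]
  · simp [lam, rhoA]; ring
  · intro k h1 h2
    simp only [ne_eq, Fin.ext_iff] at h1 h2
    simp [lam, h1, h2]

include hm in
lemma L_sw23 : L m a1 a2 a3 b1 b2 b3 = - L m a1 (a3-1) (a2+1) b1 b2 b3 := by
  unfold L
  apply altA_swap m _ _ ⟨1, by omega⟩ ⟨2, by omega⟩ (by simp [Fin.ext_iff])
  · simp [lam, rhoA]; ring
  · simp [lam, rhoA]; ring
  · intro k h1 h2
    simp only [ne_eq, Fin.ext_iff] at h1 h2
    simp [lam, h1, h2]

include hm in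
lemma L_sx12 : L m a1 a2 a3 b1 b2 b3 = - L m a1 a2 a3 (b2-1) (b1+1) b3 := by
  unfold L
  have e1 : ((m - 1 : ℕ) : ℚ) = m - 1 := by rw [Nat.cast_sub (by omega)]; simp
  apply altA_swap m _ _ ⟨m, by omega⟩ ⟨m-1, by omega⟩ (by simp [Fin.ext_iff]; omega)
  · simp only [lam, rhoA, Pi.add_apply]
    split_ifs <;> first | (exfalso; omega) | (rw [e1]; ring)
  · simp only [lam, rhoA, Pi.add_apply]
    split_ifs <;> first | (exfalso; omega) | (rw [e1]; ring)
  · intro k h1 h2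
    simp only [ne_eq, Fin.ext_iff] at h1 h2
    have h2' : ¬ (k.val + 1 = m) := by omega
    simp only [lam, rhoA, Pi.add_apply, if_neg h1, if_neg h2']

include hm in
lemma L_sx23 : L m a1 a2 a3 b1 b2 b3 = - L m a1 a2 a3 b1 (b3-1) (b2+1) := by
  unfold L
  have e1 : ((m - 1 : ℕ) : ℚ) = m - 1 := by rw [Nat.cast_sub (by omega)]; simp
  have e2 : ((m - 2 : ℕ) : ℚ) = m - 2 := by rw [Nat.cast_sub (by omega)]; simp
  apply altA_swap m _ _ ⟨m-1, by omega⟩ ⟨m-2, by omega⟩ (by simp [Fin.ext_iff]; omega)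
  · simp only [lam, rhoA, Pi.add_apply]
    split_ifs <;> first | (exfalso; omega) | (rw [e1, e2]; ring)
  · simp only [lam, rhoA, Pi.add_apply]
    split_ifs <;> first | (exfalso; omega) | (rw [e1, e2]; ring)
  · intro k h1 h2
    simp only [ne_eq, Fin.ext_iff] at h1 h2
    have h1' : ¬ (k.val + 1 = m) := by omega
    have h2' : ¬ (k.val + 2 = m) := by omega
    simp only [lam, rhoA, Pi.add_apply, if_neg h1', if_neg h2']

include hm in
lemma L_a3_1 : L m a1 a2 (-1) b1 b2 0 = 0 := by
  unfold L
  apply altA_zero m _ ⟨2, by omega⟩ ⟨3, by omega⟩ (by simp [Fin.ext_iff])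
  simp only [lam, rhoA, Pi.add_apply]
  split_ifs <;> first | (exfalso; omega) | (push_cast; ring)

include hm in
lemma L_a3_2 : L m a1 a2 (-2) b1 0 0 = 0 := by
  unfold L
  apply altA_zero m _ ⟨2, by omega⟩ ⟨4, by omega⟩ (by simp [Fin.ext_iff])
  simp only [lam, rhoA, Pi.add_apply]
  split_ifs <;> first | (exfalso; omega) | (push_cast; ring)

include hm in
lemma L_a3_3 : L m a1 a2 (-3) 0 0 0 = 0 := by
  unfold L
  apply altA_zero m _ ⟨2, by omega⟩ ⟨5, by omega⟩ (by simp [Fin.ext_iff])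
  simp only [lam, rhoA, Pi.add_apply]
  split_ifs <;> first | (exfalso; omega) | (push_cast; ring)

include hm in
lemma L_b3_1 : L m a1 a2 0 b1 b2 (-1) = 0 := by
  unfold L
  have e2 : ((m - 2 : ℕ) : ℚ) = m - 2 := by rw [Nat.cast_sub (by omega)]; simp
  have e3 : ((m - 3 : ℕ) : ℚ) = m - 3 := by rw [Nat.cast_sub (by omega)]; simp
  apply altA_zero m _ ⟨m-2, by omega⟩ ⟨m-3, by omega⟩ (by simp [Fin.ext_iff]; omega)
  simp only [lam, rhoA, Pi.add_apply]
  split_ifs <;> first | (exfalso; omega) | (rw [e2, e3]; ring)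

include hm in
lemma L_b3_2 : L m a1 0 0 b1 b2 (-2) = 0 := by
  unfold L
  have e2 : ((m - 2 : ℕ) : ℚ) = m - 2 := by rw [Nat.cast_sub (by omega)]; simp
  have e3 : ((m - 4 : ℕ) : ℚ) = m - 4 := by rw [Nat.cast_sub (by omega)]; simp
  apply altA_zero m _ ⟨m-2, by omega⟩ ⟨m-4, by omega⟩ (by simp [Fin.ext_iff]; omega)
  simp only [lam, rhoA, Pi.add_apply]
  split_ifs <;> first | (exfalso; omega) | (rw [e2, e3]; ring)

include hm in
lemma L_b3_3 : L m 0 0 0 b1 b2 (-3) = 0 := by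
  unfold L
  have e2 : ((m - 2 : ℕ) : ℚ) = m - 2 := by rw [Nat.cast_sub (by omega)]; simp
  have e3 : ((m - 5 : ℕ) : ℚ) = m - 5 := by rw [Nat.cast_sub (by omega)]; simp
  apply altA_zero m _ ⟨m-2, by omega⟩ ⟨m-5, by omega⟩ (by simp [Fin.ext_iff]; omega)
  simp only [lam, rhoA, Pi.add_apply]
  split_ifs <;> first | (exfalso; omega) | (rw [e2, e3]; ring)

-- vanishing rules
include hm in
lemma L_z12 (h : a2 = a1 + 1) : L m a1 a2 a3 b1 b2 b3 = 0 := by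
  apply two_tf; conv_lhs => rw [L_sw12 hm]
  subst h; simp
include hm in
lemma L_z23 (h : a3 = a2 + 1) : L m a1 a2 a3 b1 b2 b3 = 0 := by
  apply two_tf; conv_lhs => rw [L_sw23 hm]
  subst h; simp
include hm in
lemma L_y12 (h : b2 = b1 + 1) : L m a1 a2 a3 b1 b2 b3 = 0 := by
  apply two_tf; conv_lhs => rw [L_sx12 hm]
  subst h; simp
include hm in
lemma L_y23 (h : b3 = b2 + 1) : L m a1 a2 a3 b1 b2 b3 = 0 := by
  apply two_tf; conv_lhs => rw [L_sx23 hm]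
  subst h; simp
include hm in
lemma L_s12 (h : a1 + 1 < a2) : L m a1 a2 a3 b1 b2 b3 = - L m (a2-1) (a1+1) a3 b1 b2 b3 :=
  L_sw12 hm ..
include hm in
lemma L_s23 (h : a2 + 1 < a3) : L m a1 a2 a3 b1 b2 b3 = - L m a1 (a3-1) (a2+1) b1 b2 b3 :=
  L_sw23 hm ..
include hm in
lemma L_t12 (h : b1 + 1 < b2) : L m a1 a2 a3 b1 b2 b3 = - L m a1 a2 a3 (b2-1) (b1+1) b3 :=
  L_sx12 hm ..
include hm in
lemma L_t23 (h : b2 + 1 < b3) : L m a1 a2 a3 b1 b2 b3 = - L m a1 a2 a3 b1 (b3-1) (b2+1) :=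
  L_sx23 hm ..

-- multiplication rules
include hm in
lemma L_q1 : L m a1 a2 a3 b1 b2 0 * PS m (-1) =
      L m (a1+ -1) a2 a3 b1 b2 0 + L m a1 (a2+ -1) a3 b1 b2 0 + L m a1 a2 (a3+ -1) b1 b2 0
      + L m a1 a2 a3 (b1+1) b2 0 + L m a1 a2 a3 b1 (b2+1) 0 + L m a1 a2 a3 b1 b2 1 := by
  rw [L_mul (hm := hm)]
  · norm_num
  intro i h1 h2
  apply altA_zero m _ i ⟨i.val+1, by omega⟩ (by simp [Fin.ext_iff])
  simp only [lam, rhoA, Pi.add_apply, Pi.single_apply, Fin.ext_iff]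
  split_ifs <;> first | (exfalso; omega) | (push_cast; ring)

include hm in
lemma L_q2 : L m a1 a2 a3 0 0 0 * PS m (-2) =
      L m (a1+ -2) a2 a3 0 0 0 + L m a1 (a2+ -2) a3 0 0 0 + L m a1 a2 (a3+ -2) 0 0 0
      + L m a1 a2 a3 2 0 0 + L m a1 a2 a3 0 2 0 + L m a1 a2 a3 0 0 2 := by
  rw [L_mul (hm := hm)]
  · norm_num
  intro i h1 h2
  apply altA_zero m _ i ⟨i.val+2, by omega⟩ (by simp [Fin.ext_iff])
  simp only [lam, rhoA, Pi.add_apply, Pi.single_apply, Fin.ext_iff]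
  split_ifs <;> first | (exfalso; omega) | (push_cast; ring)

include hm in
lemma L_q3 : L m a1 a2 a3 0 0 0 * PS m (-3) =
      L m (a1+ -3) a2 a3 0 0 0 + L m a1 (a2+ -3) a3 0 0 0 + L m a1 a2 (a3+ -3) 0 0 0
      + L m a1 a2 a3 3 0 0 + L m a1 a2 a3 0 3 0 + L m a1 a2 a3 0 0 3 := by
  rw [L_mul (hm := hm)]
  · norm_num
  intro i h1 h2
  apply altA_zero m _ i ⟨i.val+3, by omega⟩ (by simp [Fin.ext_iff])
  simp only [lam, rhoA, Pi.add_apply, Pi.single_apply, Fin.ext_iff]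
  split_ifs <;> first | (exfalso; omega) | (push_cast; ring)

include hm in
lemma L_p1 : L m a1 a2 0 0 0 0 * PS m 1 =
      L m (a1+1) a2 0 0 0 0 + L m a1 (a2+1) 0 0 0 0 + L m a1 a2 1 0 0 0
      + L m a1 a2 0 (-1) 0 0 + L m a1 a2 0 0 (-1) 0 + L m a1 a2 0 0 0 (-1) := by
  rw [L_mul (hm := hm)]
  · norm_num
  intro i h1 h2
  apply altA_zero m _ i ⟨i.val-1, by omega⟩ (by simp [Fin.ext_iff]; omega)
  simp only [lam, rhoA, Pi.add_apply, Pi.single_apply, Fin.ext_iff]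
  rw [Nat.cast_sub (by omega)]
  split_ifs <;> first | (exfalso; omega) | (push_cast; ring)

include hm in
lemma L_p2 : L m 0 0 0 0 0 0 * PS m 2 =
      L m 2 0 0 0 0 0 + L m 0 2 0 0 0 0 + L m 0 0 2 0 0 0
      + L m 0 0 0 (-2) 0 0 + L m 0 0 0 0 (-2) 0 + L m 0 0 0 0 0 (-2) := by
  rw [L_mul (hm := hm)]
  · norm_num
  intro i h1 h2
  apply altA_zero m _ i ⟨i.val-2, by omega⟩ (by simp [Fin.ext_iff]; omega)
  simp only [lam, rhoA, Pi.add_apply, Pi.single_apply, Fin.ext_iff]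
  rw [Nat.cast_sub (by omega)]
  split_ifs <;> first | (exfalso; omega) | (push_cast; ring)

include hm in
lemma L_p3 : L m 0 0 0 0 0 0 * PS m 3 =
      L m 3 0 0 0 0 0 + L m 0 3 0 0 0 0 + L m 0 0 3 0 0 0
      + L m 0 0 0 (-3) 0 0 + L m 0 0 0 0 (-3) 0 + L m 0 0 0 0 0 (-3) := by
  rw [L_mul (hm := hm)]
  · norm_num
  intro i h1 h2
  apply altA_zero m _ i ⟨i.val-3, by omega⟩ (by simp [Fin.ext_iff]; omega)
  simp only [lam, rhoA, Pi.add_apply, Pi.single_apply, Fin.ext_iff]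
  rw [Nat.cast_sub (by omega)]
  split_ifs <;> first | (exfalso; omega) | (push_cast; ring)

end MFPaper

namespace MFPaper
section
variable {m : ℕ} (hm : 5 ≤ m)
include hm

lemma r000000p1 : L m 0 0 0 0 0 0 * PS m (1) =
    L m 1 0 0 0 0 0 := by
  rw [L_p1 hm]
  norm_num [L_z12 hm, L_z23 hm, L_y12 hm, L_y23 hm, L_s12 hm, L_s23 hm, L_t12 hm, L_t23 hm,
    L_a3_1 hm, L_a3_2 hm, L_a3_3 hm, L_b3_1 hm, L_b3_2 hm, L_b3_3 hm]
  try abel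

lemma r100000p1 : L m 1 0 0 0 0 0 * PS m (1) =
    L m 2 0 0 0 0 0 + L m 1 1 0 0 0 0 := by
  rw [L_p1 hm]
  norm_num [L_z12 hm, L_z23 hm, L_y12 hm, L_y23 hm, L_s12 hm, L_s23 hm, L_t12 hm, L_t23 hm,
    L_a3_1 hm, L_a3_2 hm, L_a3_3 hm, L_b3_1 hm, L_b3_2 hm, L_b3_3 hm]
  try abel

lemma r200000p1 : L m 2 0 0 0 0 0 * PS m (1) =
    L m 3 0 0 0 0 0 + L m 2 1 0 0 0 0 := by
  rw [L_p1 hm]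
  norm_num [L_z12 hm, L_z23 hm, L_y12 hm, L_y23 hm, L_s12 hm, L_s23 hm, L_t12 hm, L_t23 hm,
    L_a3_1 hm, L_a3_2 hm, L_a3_3 hm, L_b3_1 hm, L_b3_2 hm, L_b3_3 hm]
  try abel

lemma r110000p1 : L m 1 1 0 0 0 0 * PS m (1) =
    L m 2 1 0 0 0 0 + L m 1 1 1 0 0 0 := by
  rw [L_p1 hm]
  norm_num [L_z12 hm, L_z23 hm, L_y12 hm, L_y23 hm, L_s12 hm, L_s23 hm, L_t12 hm, L_t23 hm,
    L_a3_1 hm, L_a3_2 hm, L_a3_3 hm, L_b3_1 hm, L_b3_2 hm, L_b3_3 hm]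
  try abel

lemma r000000p2 : L m 0 0 0 0 0 0 * PS m (2) =
    L m 2 0 0 0 0 0 + (-1) * L m 1 1 0 0 0 0 := by
  rw [L_p2 hm]
  norm_num [L_z12 hm, L_z23 hm, L_y12 hm, L_y23 hm, L_s12 hm, L_s23 hm, L_t12 hm, L_t23 hm,
    L_a3_1 hm, L_a3_2 hm, L_a3_3 hm, L_b3_1 hm, L_b3_2 hm, L_b3_3 hm]
  try abel

lemma r000000p3 : L m 0 0 0 0 0 0 * PS m (3) =
    L m 3 0 0 0 0 0 + (-1) * L m 2 1 0 0 0 0 + L m 1 1 1 0 0 0 := by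
  rw [L_p3 hm]
  norm_num [L_z12 hm, L_z23 hm, L_y12 hm, L_y23 hm, L_s12 hm, L_s23 hm, L_t12 hm, L_t23 hm,
    L_a3_1 hm, L_a3_2 hm, L_a3_3 hm, L_b3_1 hm, L_b3_2 hm, L_b3_3 hm]
  try abel

lemma r100000q1 : L m 1 0 0 0 0 0 * PS m (-1) =
    L m 1 0 0 1 0 0 + L m 0 0 0 0 0 0 := by
  rw [L_q1 hm]
  norm_num [L_z12 hm, L_z23 hm, L_y12 hm, L_y23 hm, L_s12 hm, L_s23 hm, L_t12 hm, L_t23 hm,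
    L_a3_1 hm, L_a3_2 hm, L_a3_3 hm, L_b3_1 hm, L_b3_2 hm, L_b3_3 hm]
  try abel

lemma r300000q1 : L m 3 0 0 0 0 0 * PS m (-1) =
    L m 3 0 0 1 0 0 + L m 2 0 0 0 0 0 := by
  rw [L_q1 hm]
  norm_num [L_z12 hm, L_z23 hm, L_y12 hm, L_y23 hm, L_s12 hm, L_s23 hm, L_t12 hm, L_t23 hm,
    L_a3_1 hm, L_a3_2 hm, L_a3_3 hm, L_b3_1 hm, L_b3_2 hm, L_b3_3 hm]
  try abel

lemma r200000q1 : L m 2 0 0 0 0 0 * PS m (-1) =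
    L m 2 0 0 1 0 0 + L m 1 0 0 0 0 0 := by
  rw [L_q1 hm]
  norm_num [L_z12 hm, L_z23 hm, L_y12 hm, L_y23 hm, L_s12 hm, L_s23 hm, L_t12 hm, L_t23 hm,
    L_a3_1 hm, L_a3_2 hm, L_a3_3 hm, L_b3_1 hm, L_b3_2 hm, L_b3_3 hm]
  try abel

lemma r300100q1 : L m 3 0 0 1 0 0 * PS m (-1) =
    L m 3 0 0 2 0 0 + L m 3 0 0 1 1 0 + L m 2 0 0 1 0 0 := by
  rw [L_q1 hm]
  norm_num [L_z12 hm, L_z23 hm, L_y12 hm, L_y23 hm, L_s12 hm, L_s23 hm, L_t12 hm, L_t23 hm,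
    L_a3_1 hm, L_a3_2 hm, L_a3_3 hm, L_b3_1 hm, L_b3_2 hm, L_b3_3 hm]
  try abel

lemma r200100q1 : L m 2 0 0 1 0 0 * PS m (-1) =
    L m 2 0 0 2 0 0 + L m 2 0 0 1 1 0 + L m 1 0 0 1 0 0 := by
  rw [L_q1 hm]
  norm_num [L_z12 hm, L_z23 hm, L_y12 hm, L_y23 hm, L_s12 hm, L_s23 hm, L_t12 hm, L_t23 hm,
    L_a3_1 hm, L_a3_2 hm, L_a3_3 hm, L_b3_1 hm, L_b3_2 hm, L_b3_3 hm]
  try abel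

lemma r300110q1 : L m 3 0 0 1 1 0 * PS m (-1) =
    L m 3 0 0 2 1 0 + L m 3 0 0 1 1 1 + L m 2 0 0 1 1 0 := by
  rw [L_q1 hm]
  norm_num [L_z12 hm, L_z23 hm, L_y12 hm, L_y23 hm, L_s12 hm, L_s23 hm, L_t12 hm, L_t23 hm,
    L_a3_1 hm, L_a3_2 hm, L_a3_3 hm, L_b3_1 hm, L_b3_2 hm, L_b3_3 hm]
  try abel

lemma r300200q1 : L m 3 0 0 2 0 0 * PS m (-1) =
    L m 3 0 0 3 0 0 + L m 3 0 0 2 1 0 + L m 2 0 0 2 0 0 := by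
  rw [L_q1 hm]
  norm_num [L_z12 hm, L_z23 hm, L_y12 hm, L_y23 hm, L_s12 hm, L_s23 hm, L_t12 hm, L_t23 hm,
    L_a3_1 hm, L_a3_2 hm, L_a3_3 hm, L_b3_1 hm, L_b3_2 hm, L_b3_3 hm]
  try abel

lemma r300000q2 : L m 3 0 0 0 0 0 * PS m (-2) =
    L m 3 0 0 2 0 0 + (-1) * L m 3 0 0 1 1 0 + L m 1 0 0 0 0 0 := by
  rw [L_q2 hm]
  norm_num [L_z12 hm, L_z23 hm, L_y12 hm, L_y23 hm, L_s12 hm, L_s23 hm, L_t12 hm, L_t23 hm,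
    L_a3_1 hm, L_a3_2 hm, L_a3_3 hm, L_b3_1 hm, L_b3_2 hm, L_b3_3 hm]
  try abel

lemma r300000q3 : L m 3 0 0 0 0 0 * PS m (-3) =
    L m 3 0 0 3 0 0 + (-1) * L m 3 0 0 2 1 0 + L m 3 0 0 1 1 1 + L m 0 0 0 0 0 0 := by
  rw [L_q3 hm]
  norm_num [L_z12 hm, L_z23 hm, L_y12 hm, L_y23 hm, L_s12 hm, L_s23 hm, L_t12 hm, L_t23 hm,
    L_a3_1 hm, L_a3_2 hm, L_a3_3 hm, L_b3_1 hm, L_b3_2 hm, L_b3_3 hm]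
  try abel

lemma r210000q1 : L m 2 1 0 0 0 0 * PS m (-1) =
    L m 2 1 0 1 0 0 + L m 2 0 0 0 0 0 + L m 1 1 0 0 0 0 := by
  rw [L_q1 hm]
  norm_num [L_z12 hm, L_z23 hm, L_y12 hm, L_y23 hm, L_s12 hm, L_s23 hm, L_t12 hm, L_t23 hm,
    L_a3_1 hm, L_a3_2 hm, L_a3_3 hm, L_b3_1 hm, L_b3_2 hm, L_b3_3 hm]
  try abel

lemma r110000q1 : L m 1 1 0 0 0 0 * PS m (-1) =
    L m 1 1 0 1 0 0 + L m 1 0 0 0 0 0 := by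
  rw [L_q1 hm]
  norm_num [L_z12 hm, L_z23 hm, L_y12 hm, L_y23 hm, L_s12 hm, L_s23 hm, L_t12 hm, L_t23 hm,
    L_a3_1 hm, L_a3_2 hm, L_a3_3 hm, L_b3_1 hm, L_b3_2 hm, L_b3_3 hm]
  try abel

lemma r210100q1 : L m 2 1 0 1 0 0 * PS m (-1) =
    L m 2 1 0 2 0 0 + L m 2 1 0 1 1 0 + L m 2 0 0 1 0 0 + L m 1 1 0 1 0 0 := by
  rw [L_q1 hm]
  norm_num [L_z12 hm, L_z23 hm, L_y12 hm, L_y23 hm, L_s12 hm, L_s23 hm, L_t12 hm, L_t23 hm,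
    L_a3_1 hm, L_a3_2 hm, L_a3_3 hm, L_b3_1 hm, L_b3_2 hm, L_b3_3 hm]
  try abel

lemma r110100q1 : L m 1 1 0 1 0 0 * PS m (-1) =
    L m 1 1 0 2 0 0 + L m 1 1 0 1 1 0 + L m 1 0 0 1 0 0 := by
  rw [L_q1 hm]
  norm_num [L_z12 hm, L_z23 hm, L_y12 hm, L_y23 hm, L_s12 hm, L_s23 hm, L_t12 hm, L_t23 hm,
    L_a3_1 hm, L_a3_2 hm, L_a3_3 hm, L_b3_1 hm, L_b3_2 hm, L_b3_3 hm]
  try abel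

lemma r210110q1 : L m 2 1 0 1 1 0 * PS m (-1) =
    L m 2 1 0 2 1 0 + L m 2 1 0 1 1 1 + L m 2 0 0 1 1 0 + L m 1 1 0 1 1 0 := by
  rw [L_q1 hm]
  norm_num [L_z12 hm, L_z23 hm, L_y12 hm, L_y23 hm, L_s12 hm, L_s23 hm, L_t12 hm, L_t23 hm,
    L_a3_1 hm, L_a3_2 hm, L_a3_3 hm, L_b3_1 hm, L_b3_2 hm, L_b3_3 hm]
  try abel

lemma r210200q1 : L m 2 1 0 2 0 0 * PS m (-1) =
    L m 2 1 0 3 0 0 + L m 2 1 0 2 1 0 + L m 2 0 0 2 0 0 + L m 1 1 0 2 0 0 := by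
  rw [L_q1 hm]
  norm_num [L_z12 hm, L_z23 hm, L_y12 hm, L_y23 hm, L_s12 hm, L_s23 hm, L_t12 hm, L_t23 hm,
    L_a3_1 hm, L_a3_2 hm, L_a3_3 hm, L_b3_1 hm, L_b3_2 hm, L_b3_3 hm]
  try abel

lemma r210000q3 : L m 2 1 0 0 0 0 * PS m (-3) =
    L m 2 1 0 3 0 0 + (-1) * L m 2 1 0 2 1 0 + L m 2 1 0 1 1 1 + (-1) * L m 0 0 0 0 0 0 := by
  rw [L_q3 hm]
  norm_num [L_z12 hm, L_z23 hm, L_y12 hm, L_y23 hm, L_s12 hm, L_s23 hm, L_t12 hm, L_t23 hm,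
    L_a3_1 hm, L_a3_2 hm, L_a3_3 hm, L_b3_1 hm, L_b3_2 hm, L_b3_3 hm]
  try abel

lemma r111000q1 : L m 1 1 1 0 0 0 * PS m (-1) =
    L m 1 1 1 1 0 0 + L m 1 1 0 0 0 0 := by
  rw [L_q1 hm]
  norm_num [L_z12 hm, L_z23 hm, L_y12 hm, L_y23 hm, L_s12 hm, L_s23 hm, L_t12 hm, L_t23 hm,
    L_a3_1 hm, L_a3_2 hm, L_a3_3 hm, L_b3_1 hm, L_b3_2 hm, L_b3_3 hm]
  try abel

lemma r111100q1 : L m 1 1 1 1 0 0 * PS m (-1) =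
    L m 1 1 1 2 0 0 + L m 1 1 1 1 1 0 + L m 1 1 0 1 0 0 := by
  rw [L_q1 hm]
  norm_num [L_z12 hm, L_z23 hm, L_y12 hm, L_y23 hm, L_s12 hm, L_s23 hm, L_t12 hm, L_t23 hm,
    L_a3_1 hm, L_a3_2 hm, L_a3_3 hm, L_b3_1 hm, L_b3_2 hm, L_b3_3 hm]
  try abel

lemma r111110q1 : L m 1 1 1 1 1 0 * PS m (-1) =
    L m 1 1 1 2 1 0 + L m 1 1 1 1 1 1 + L m 1 1 0 1 1 0 := by
  rw [L_q1 hm]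
  norm_num [L_z12 hm, L_z23 hm, L_y12 hm, L_y23 hm, L_s12 hm, L_s23 hm, L_t12 hm, L_t23 hm,
    L_a3_1 hm, L_a3_2 hm, L_a3_3 hm, L_b3_1 hm, L_b3_2 hm, L_b3_3 hm]
  try abel

lemma r111200q1 : L m 1 1 1 2 0 0 * PS m (-1) =
    L m 1 1 1 3 0 0 + L m 1 1 1 2 1 0 + L m 1 1 0 2 0 0 := by
  rw [L_q1 hm]
  norm_num [L_z12 hm, L_z23 hm, L_y12 hm, L_y23 hm, L_s12 hm, L_s23 hm, L_t12 hm, L_t23 hm,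
    L_a3_1 hm, L_a3_2 hm, L_a3_3 hm, L_b3_1 hm, L_b3_2 hm, L_b3_3 hm]
  try abel

lemma r111000q2 : L m 1 1 1 0 0 0 * PS m (-2) =
    L m 1 1 1 2 0 0 + (-1) * L m 1 1 1 1 1 0 + (-1) * L m 1 0 0 0 0 0 := by
  rw [L_q2 hm]
  norm_num [L_z12 hm, L_z23 hm, L_y12 hm, L_y23 hm, L_s12 hm, L_s23 hm, L_t12 hm, L_t23 hm,
    L_a3_1 hm, L_a3_2 hm, L_a3_3 hm, L_b3_1 hm, L_b3_2 hm, L_b3_3 hm]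
  try abel

lemma r111000q3 : L m 1 1 1 0 0 0 * PS m (-3) =
    L m 1 1 1 3 0 0 + (-1) * L m 1 1 1 2 1 0 + L m 1 1 1 1 1 1 + L m 0 0 0 0 0 0 := by
  rw [L_q3 hm]
  norm_num [L_z12 hm, L_z23 hm, L_y12 hm, L_y23 hm, L_s12 hm, L_s23 hm, L_t12 hm, L_t23 hm,
    L_a3_1 hm, L_a3_2 hm, L_a3_3 hm, L_b3_1 hm, L_b3_2 hm, L_b3_3 hm]
  try abel

lemma r200000q2 : L m 2 0 0 0 0 0 * PS m (-2) =
    L m 2 0 0 2 0 0 + (-1) * L m 2 0 0 1 1 0 + L m 0 0 0 0 0 0 := by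
  rw [L_q2 hm]
  norm_num [L_z12 hm, L_z23 hm, L_y12 hm, L_y23 hm, L_s12 hm, L_s23 hm, L_t12 hm, L_t23 hm,
    L_a3_1 hm, L_a3_2 hm, L_a3_3 hm, L_b3_1 hm, L_b3_2 hm, L_b3_3 hm]
  try abel

lemma r110000q2 : L m 1 1 0 0 0 0 * PS m (-2) =
    L m 1 1 0 2 0 0 + (-1) * L m 1 1 0 1 1 0 + (-1) * L m 0 0 0 0 0 0 := by
  rw [L_q2 hm]
  norm_num [L_z12 hm, L_z23 hm, L_y12 hm, L_y23 hm, L_s12 hm, L_s23 hm, L_t12 hm, L_t23 hm,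
    L_a3_1 hm, L_a3_2 hm, L_a3_3 hm, L_b3_1 hm, L_b3_2 hm, L_b3_3 hm]
  try abel

lemma P111 : L m 0 0 0 0 0 0 * ((1) * (PS m (1) * PS m (1) * PS m (1))) =
    L m 3 0 0 0 0 0 + (2) * L m 2 1 0 0 0 0 + L m 1 1 1 0 0 0 := by
  linear_combination (1) * PS m (1) * PS m (1) * r000000p1 hm + (1) * PS m (1) * r100000p1 hm + (1) * r200000p1 hm + (1) * r110000p1 hm

lemma P12 : L m 0 0 0 0 0 0 * ((1) * (PS m (2) * PS m (1))) =
    L m 3 0 0 0 0 0 + (-1) * L m 1 1 1 0 0 0 := by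
  linear_combination (1) * PS m (1) * r000000p2 hm + (1) * r200000p1 hm + (-1) * r110000p1 hm

lemma P3 : L m 0 0 0 0 0 0 * ((1) * (PS m (3))) =
    L m 3 0 0 0 0 0 + (-1) * L m 2 1 0 0 0 0 + L m 1 1 1 0 0 0 := by
  linear_combination (1) * r000000p3 hm

lemma P11 : L m 0 0 0 0 0 0 * ((1) * (PS m (1) * PS m (1))) =
    L m 2 0 0 0 0 0 + L m 1 1 0 0 0 0 := by
  linear_combination (1) * PS m (1) * r000000p1 hm + (1) * r100000p1 hm

lemma P2 : L m 0 0 0 0 0 0 * ((1) * (PS m (2))) =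
    L m 2 0 0 0 0 0 + (-1) * L m 1 1 0 0 0 0 := by
  linear_combination (1) * r000000p2 hm

lemma P11q : L m 0 0 0 0 0 0 * ((1) * (PS m (1) * PS m (-1))) =
    L m 1 0 0 1 0 0 + L m 0 0 0 0 0 0 := by
  linear_combination (1) * PS m (-1) * r000000p1 hm + (1) * r100000q1 hm

lemma E3 : L m 3 0 0 0 0 0 * ((1) * (PS m (-1) * PS m (-1) * PS m (-1)) + (3) * (PS m (-2) * PS m (-1)) + (2) * (PS m (-3))) =
    (6) * L m 3 0 0 3 0 0 + (6) * L m 2 0 0 2 0 0 + (6) * L m 1 0 0 1 0 0 + (6) * L m 0 0 0 0 0 0 := by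
  linear_combination (1) * PS m (-1) * PS m (-1) * r300000q1 hm + (1) * PS m (-1) * r200000q1 hm + (1) * PS m (-1) * r300100q1 hm + (1) * r100000q1 hm + (2) * r200100q1 hm + (1) * r300110q1 hm + (1) * r300200q1 hm + (3) * PS m (-1) * r300000q2 hm + (3) * r100000q1 hm + (-3) * r300110q1 hm + (3) * r300200q1 hm + (2) * r300000q3 hm

lemma E21 : L m 2 1 0 0 0 0 * ((2) * (PS m (-1) * PS m (-1) * PS m (-1)) + (-2) * (PS m (-3))) =
    (6) * L m 2 1 0 2 1 0 + (6) * L m 2 0 0 2 0 0 + (6) * L m 2 0 0 1 1 0 + (6) * L m 1 1 0 2 0 0 + (6) * L m 1 1 0 1 1 0 + (12) * L m 1 0 0 1 0 0 + (6) * L m 0 0 0 0 0 0 := by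
  linear_combination (2) * PS m (-1) * PS m (-1) * r210000q1 hm + (2) * PS m (-1) * r110000q1 hm + (2) * PS m (-1) * r200000q1 hm + (2) * PS m (-1) * r210100q1 hm + (4) * r100000q1 hm + (4) * r110100q1 hm + (4) * r200100q1 hm + (2) * r210110q1 hm + (2) * r210200q1 hm + (-2) * r210000q3 hm

lemma E111 : L m 1 1 1 0 0 0 * ((1) * (PS m (-1) * PS m (-1) * PS m (-1)) + (-3) * (PS m (-2) * PS m (-1)) + (2) * (PS m (-3))) =
    (6) * L m 1 1 1 1 1 1 + (6) * L m 1 1 0 1 1 0 + (6) * L m 1 0 0 1 0 0 + (6) * L m 0 0 0 0 0 0 := by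
  linear_combination (1) * PS m (-1) * PS m (-1) * r111000q1 hm + (1) * PS m (-1) * r110000q1 hm + (1) * PS m (-1) * r111100q1 hm + (1) * r100000q1 hm + (2) * r110100q1 hm + (1) * r111110q1 hm + (1) * r111200q1 hm + (-3) * PS m (-1) * r111000q2 hm + (3) * r100000q1 hm + (3) * r111110q1 hm + (-3) * r111200q1 hm + (2) * r111000q3 hm

lemma E2 : L m 2 0 0 0 0 0 * ((1) * (PS m (-1) * PS m (-1)) + (1) * (PS m (-2))) =
    (2) * L m 2 0 0 2 0 0 + (2) * L m 1 0 0 1 0 0 + (2) * L m 0 0 0 0 0 0 := by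
  linear_combination (1) * PS m (-1) * r200000q1 hm + (1) * r100000q1 hm + (1) * r200100q1 hm + (1) * r200000q2 hm

lemma E11 : L m 1 1 0 0 0 0 * ((1) * (PS m (-1) * PS m (-1)) + (-1) * (PS m (-2))) =
    (2) * L m 1 1 0 1 1 0 + (2) * L m 1 0 0 1 0 0 + (2) * L m 0 0 0 0 0 0 := by
  linear_combination (1) * PS m (-1) * r110000q1 hm + (1) * r100000q1 hm + (1) * r110100q1 hm + (-1) * r110000q2 hm

lemma main_comp : L m 0 0 0 0 0 0 * ((PS m 1 * PS m (-1) - 1)^3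
    + 3 * ((PS m 1 * PS m (-1) - 1) * (PS m 2 * PS m (-2) - 1)) + 2 * (PS m 3 * PS m (-3) - 1)) =
    6 * (L m 3 0 0 3 0 0 + L m 2 0 0 2 0 0 + L m 1 0 0 1 0 0 + L m 1 0 0 1 0 0 + L m 1 1 0 1 1 0 + L m 1 1 1 1 1 1 + L m 2 1 0 2 1 0 + L m 2 0 0 1 1 0 + L m 1 1 0 2 0 0 + L m 0 0 0 0 0 0) := by
  linear_combination (PS m (-1))^3 * P111 hm + 3 * PS m (-1) * PS m (-2) * P12 hm +
    2 * PS m (-3) * P3 hm - 3 * (PS m (-1))^2 * P11 hm - 3 * PS m (-2) * P2 hm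
    + E3 hm + E21 hm + E111 hm - 3 * E2 hm - 3 * E11 hm

end
end MFPaper

namespace MFPaper
lemma partLift_e (r k : ℕ) (h1 : 1 ≤ k) (h2 : k ≤ r) (i : Fin (r+1)) :
    partLift r (e r k) i = if i.val < k then 1 else 0 := by
  unfold partLift e
  rw [Finset.sum_filter, Finset.sum_eq_single (⟨k-1, by omega⟩ : Fin r)]
  · simp only [show k - 1 + 1 = k by omega, if_true]
    split_ifs <;> first | (exfalso; omega) | simp
  · intro b _ hb
    have : ¬ (b.val + 1 = k) := fun h => hb (Fin.ext (by simp; omega))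
    simp [this]
  · simp

lemma trace_e (r k : ℕ) (h1 : 1 ≤ k) (h2 : k ≤ r) :
    ∑ j : Fin r, (((j : ℕ) : ℚ) + 1) * (e r k j : ℚ) = k := by
  unfold e
  rw [Finset.sum_eq_single (⟨k-1, by omega⟩ : Fin r)]
  · simp only [show k - 1 + 1 = k by omega, if_true]
    rw [Nat.cast_sub h1]; simp
  · intro b _ hb
    have : ¬ (b.val + 1 = k) := fun h => hb (Fin.ext (by simp; omega))
    simp [this]
  · simp

def dd (i k : ℕ) : ℚ := if i < k then 1 else 0
lemma dd_pos (i k : ℕ) (h : i < k) : dd i k = 1 := if_pos h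
lemma dd_neg (i k : ℕ) (h : k ≤ i) : dd i k = 0 := if_neg (by omega)

lemma slWt_e (r k : ℕ) (h1 : 1 ≤ k) (h2 : k ≤ r) (i : Fin (r+1)) :
    slWt r (e r k) i = dd i.val k - (k : ℚ) / (r + 1) := by
  unfold dd
  unfold slWt; rw [partLift_e r k h1 h2, trace_e r k h1 h2]

lemma slWt_add (r : ℕ) (d d' : Fin r → ℕ) : slWt r (d + d') = slWt r d + slWt r d' := by
  funext i
  simp only [slWt, partLift, Pi.add_apply, Nat.cast_add, Finset.sum_add_distrib, mul_add]
  ring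

lemma slWt_zero (r : ℕ) : slWt r 0 = 0 := by
  funext i
  simp [slWt, partLift]

lemma slWt_smul (r n : ℕ) (d : Fin r → ℕ) : slWt r (n • d) = (n : ℚ) • slWt r d := by
  induction n with
  | zero => simp [slWt_zero]
  | succ k ih => rw [succ_nsmul, slWt_add, ih]; push_cast; rw [add_smul, one_smul]

section
variable {m : ℕ} (hm : 5 ≤ m)
include hm
lemma lam_eq (a1 a2 a3 b1 b2 b3 : ℚ) (i : Fin (m+1)) : lam m a1 a2 a3 b1 b2 b3 i =
    (a1 - a2) * dd i.val 1 + (a2 - a3) * dd i.val 2 + a3 * dd i.val 3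
    + b3 * (dd i.val (m-2) - 1) + (b2 - b3) * (dd i.val (m-1) - 1)
    + (b1 - b2) * (dd i.val m - 1) := by
  have := i.2
  unfold lam
  split_ifs <;> simp (disch := omega) only [dd_pos, dd_neg] <;> ring

lemma w1 : slWt m (3 • e m 1 + 3 • e m m) = lam m 3 0 0 3 0 0 := by
  have hc : ((m:ℚ) + 1) ≠ 0 := by positivity
  have e1 : ((m - 1 : ℕ) : ℚ) = m - 1 := by rw [Nat.cast_sub (by omega)]; simp
  have e2 : ((m - 2 : ℕ) : ℚ) = m - 2 := by rw [Nat.cast_sub (by omega)]; simp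
  funext i
  have := i.2
  simp only [slWt_add, slWt_smul, Pi.add_apply, Pi.smul_apply, smul_eq_mul, slWt_e m 1 (by omega) (by omega),
    slWt_e m 2 (by omega) (by omega), slWt_e m 3 (by omega) (by omega),
    slWt_e m (m-1) (by omega) (by omega), slWt_e m (m-2) (by omega) (by omega),
    slWt_e m m (by omega) (by omega), lam_eq hm, e1, e2]
  push_cast; field_simp; ring

lemma w2 : slWt m (2 • e m 1 + 2 • e m m) = lam m 2 0 0 2 0 0 := by
  have hc : ((m:ℚ) + 1) ≠ 0 := by positivity
  have e1 : ((m - 1 : ℕ) : ℚ) = m - 1 := by rw [Nat.cast_sub (by omega)]; simp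
  have e2 : ((m - 2 : ℕ) : ℚ) = m - 2 := by rw [Nat.cast_sub (by omega)]; simp
  funext i
  have := i.2
  simp only [slWt_add, slWt_smul, Pi.add_apply, Pi.smul_apply, smul_eq_mul, slWt_e m 1 (by omega) (by omega),
    slWt_e m 2 (by omega) (by omega), slWt_e m 3 (by omega) (by omega),
    slWt_e m (m-1) (by omega) (by omega), slWt_e m (m-2) (by omega) (by omega),
    slWt_e m m (by omega) (by omega), lam_eq hm, e1, e2]
  push_cast; field_simp; ring

lemma w3 : slWt m (e m 1 + e m m) = lam m 1 0 0 1 0 0 := by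
  have hc : ((m:ℚ) + 1) ≠ 0 := by positivity
  have e1 : ((m - 1 : ℕ) : ℚ) = m - 1 := by rw [Nat.cast_sub (by omega)]; simp
  have e2 : ((m - 2 : ℕ) : ℚ) = m - 2 := by rw [Nat.cast_sub (by omega)]; simp
  funext i
  have := i.2
  simp only [slWt_add, slWt_smul, Pi.add_apply, Pi.smul_apply, smul_eq_mul, slWt_e m 1 (by omega) (by omega),
    slWt_e m 2 (by omega) (by omega), slWt_e m 3 (by omega) (by omega),
    slWt_e m (m-1) (by omega) (by omega), slWt_e m (m-2) (by omega) (by omega),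
    slWt_e m m (by omega) (by omega), lam_eq hm, e1, e2]
  push_cast; field_simp; ring

lemma w4 : slWt m (e m 2 + e m (m - 1)) = lam m 1 1 0 1 1 0 := by
  have hc : ((m:ℚ) + 1) ≠ 0 := by positivity
  have e1 : ((m - 1 : ℕ) : ℚ) = m - 1 := by rw [Nat.cast_sub (by omega)]; simp
  have e2 : ((m - 2 : ℕ) : ℚ) = m - 2 := by rw [Nat.cast_sub (by omega)]; simp
  funext i
  have := i.2
  simp only [slWt_add, slWt_smul, Pi.add_apply, Pi.smul_apply, smul_eq_mul, slWt_e m 1 (by omega) (by omega),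
    slWt_e m 2 (by omega) (by omega), slWt_e m 3 (by omega) (by omega),
    slWt_e m (m-1) (by omega) (by omega), slWt_e m (m-2) (by omega) (by omega),
    slWt_e m m (by omega) (by omega), lam_eq hm, e1, e2]
  push_cast; field_simp; ring

lemma w5 : slWt m (e m 3 + e m (m - 2)) = lam m 1 1 1 1 1 1 := by
  have hc : ((m:ℚ) + 1) ≠ 0 := by positivity
  have e1 : ((m - 1 : ℕ) : ℚ) = m - 1 := by rw [Nat.cast_sub (by omega)]; simp
  have e2 : ((m - 2 : ℕ) : ℚ) = m - 2 := by rw [Nat.cast_sub (by omega)]; simp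
  funext i
  have := i.2
  simp only [slWt_add, slWt_smul, Pi.add_apply, Pi.smul_apply, smul_eq_mul, slWt_e m 1 (by omega) (by omega),
    slWt_e m 2 (by omega) (by omega), slWt_e m 3 (by omega) (by omega),
    slWt_e m (m-1) (by omega) (by omega), slWt_e m (m-2) (by omega) (by omega),
    slWt_e m m (by omega) (by omega), lam_eq hm, e1, e2]
  push_cast; field_simp; ring

lemma w6 : slWt m (e m 1 + e m 2 + e m (m - 1) + e m m) = lam m 2 1 0 2 1 0 := by
  have hc : ((m:ℚ) + 1) ≠ 0 := by positivity
  have e1 : ((m - 1 : ℕ) : ℚ) = m - 1 := by rw [Nat.cast_sub (by omega)]; simp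
  have e2 : ((m - 2 : ℕ) : ℚ) = m - 2 := by rw [Nat.cast_sub (by omega)]; simp
  funext i
  have := i.2
  simp only [slWt_add, slWt_smul, Pi.add_apply, Pi.smul_apply, smul_eq_mul, slWt_e m 1 (by omega) (by omega),
    slWt_e m 2 (by omega) (by omega), slWt_e m 3 (by omega) (by omega),
    slWt_e m (m-1) (by omega) (by omega), slWt_e m (m-2) (by omega) (by omega),
    slWt_e m m (by omega) (by omega), lam_eq hm, e1, e2]
  push_cast; field_simp; ring

lemma w7 : slWt m (2 • e m 1 + e m (m - 1)) = lam m 2 0 0 1 1 0 := by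
  have hc : ((m:ℚ) + 1) ≠ 0 := by positivity
  have e1 : ((m - 1 : ℕ) : ℚ) = m - 1 := by rw [Nat.cast_sub (by omega)]; simp
  have e2 : ((m - 2 : ℕ) : ℚ) = m - 2 := by rw [Nat.cast_sub (by omega)]; simp
  funext i
  have := i.2
  simp only [slWt_add, slWt_smul, Pi.add_apply, Pi.smul_apply, smul_eq_mul, slWt_e m 1 (by omega) (by omega),
    slWt_e m 2 (by omega) (by omega), slWt_e m 3 (by omega) (by omega),
    slWt_e m (m-1) (by omega) (by omega), slWt_e m (m-2) (by omega) (by omega),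
    slWt_e m m (by omega) (by omega), lam_eq hm, e1, e2]
  push_cast; field_simp; ring

lemma w8 : slWt m (e m 2 + 2 • e m m) = lam m 1 1 0 2 0 0 := by
  have hc : ((m:ℚ) + 1) ≠ 0 := by positivity
  have e1 : ((m - 1 : ℕ) : ℚ) = m - 1 := by rw [Nat.cast_sub (by omega)]; simp
  have e2 : ((m - 2 : ℕ) : ℚ) = m - 2 := by rw [Nat.cast_sub (by omega)]; simp
  funext i
  have := i.2
  simp only [slWt_add, slWt_smul, Pi.add_apply, Pi.smul_apply, smul_eq_mul, slWt_e m 1 (by omega) (by omega),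
    slWt_e m 2 (by omega) (by omega), slWt_e m 3 (by omega) (by omega),
    slWt_e m (m-1) (by omega) (by omega), slWt_e m (m-2) (by omega) (by omega),
    slWt_e m m (by omega) (by omega), lam_eq hm, e1, e2]
  push_cast; field_simp; ring

lemma w9 : slWt m 0 = lam m 0 0 0 0 0 0 := by
  rw [slWt_zero]; funext i; simp [lam]
end

lemma coeff_altA (r : ℕ) (v w : Fin (r+1) → ℚ) (hv : StrictAnti v) (hw : StrictAnti w) :
    (altA r v).coeff w = if v = w then 1 else 0 := by
  unfold altA mono
  simp only [AddMonoidAlgebra.coeff_sum, Finsupp.finset_sum_apply, AddMonoidAlgebra.coeff_smul,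
    Finsupp.smul_apply, AddMonoidAlgebra.coeff_single, Finsupp.single_apply]
  rw [Finset.sum_eq_single (1 : Equiv.Perm (Fin (r+1)))]
  · by_cases h : v = w
    · subst h; simp
    · have h2 : ¬ ((fun i => v ((1 : Equiv.Perm (Fin (r+1))) i)) = w) := h
      rw [if_neg h, if_neg h2, smul_zero]
  · intro σ _ hσ
    rw [if_neg, smul_zero]
    intro h
    apply hσ
    have hs : StrictMono σ := by
      intro i j hij
      have := hw hij
      rw [← h] at this
      exact hv.lt_iff_gt.1 this
    have : (σ : Fin (r+1) → Fin (r+1)) = id := by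
      have hr : Set.range σ = Set.range (id : Fin (r+1) → Fin (r+1)) := by simp
      exact (StrictMono.range_inj hs strictMono_id).1 hr
    ext i; simp [this]
  · simp

instance (k : ℕ) : NoZeroDivisors (CharRing k) := inferInstance

lemma pw_mul {k : ℕ} (n : ℕ) (x y : CharRing k) : pw n (x * y) = pw n x * pw n y := by
  unfold pw
  exact AddMonoidAlgebra.mapDomain_mul (DistribMulAction.toAddMonoidHom (Fin k → ℚ) (n : ℚ)) x y
lemma pw_mono {k : ℕ} (n : ℕ) (v : Fin k → ℚ) : pw n (mono v) = mono ((n:ℚ) • v) := by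
  unfold pw mono
  simp [AddMonoidAlgebra.mapDomain_single]
lemma pw_one {k : ℕ} (n : ℕ) : pw n (1 : CharRing k) = 1 := by
  have : (1 : CharRing k) = mono 0 := rfl
  rw [this, pw_mono]; simp
lemma pw_sub {k : ℕ} (n : ℕ) (x y : CharRing k) : pw n (x - y) = pw n x - pw n y := by
  rw [eq_sub_iff_add_eq]; unfold pw
  rw [← AddMonoidAlgebra.mapDomain_add]; simp
lemma pw_PS (r n : ℕ) (c : ℚ) : pw n (PS r c) = PS r (n * c) := by
  unfold PS
  have : ∀ s : Finset (Fin (r+1)), pw n (∑ i ∈ s, mono (Pi.single i c)) = ∑ i ∈ s, mono (Pi.single i (n*c) : Fin (r+1) → ℚ) := by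
    intro s
    induction s using Finset.induction_on with
    | empty => simp [pw]
    | insert a s ha ih =>
      rw [Finset.sum_insert ha, Finset.sum_insert ha, ← ih]
      conv_lhs => unfold pw
      rw [AddMonoidAlgebra.mapDomain_add]
      congr 1
      change pw n _ = _
      rw [pw_mono]; congr 1
      rw [← Pi.single_smul]; rfl
  exact this _
end MFPaper

namespace MFPaper

lemma partLift_anti (r : ℕ) (d : Fin r → ℕ) (i j : Fin (r+1)) (h : i ≤ j) :
    partLift r d j ≤ partLift r d i := by
  unfold partLift
  apply Finset.sum_le_sum_of_subset_of_nonneg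
  · intro k hk
    simp only [Finset.mem_filter, Finset.mem_univ, true_and] at hk ⊢
    have : i.val ≤ j.val := h
    omega
  · intros; positivity

lemma rhoA_anti (r : ℕ) : StrictAnti (rhoA r) := by
  intro i j h
  unfold rhoA
  have : (i.val : ℚ) < j.val := by exact_mod_cast h
  linarith

lemma wt_anti (r : ℕ) (d : Fin r → ℕ) : StrictAnti (slWt r d + rhoA r) := by
  intro i j h
  have h1 := partLift_anti r d i j h.le
  have h2 := rhoA_anti r h
  simp only [Pi.add_apply, slWt]
  linarith

lemma partLift_step (r : ℕ) (d : Fin r → ℕ) (j : Fin r) :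
    partLift r d j.castSucc = d j + partLift r d j.succ := by
  unfold partLift
  have : Finset.univ.filter (fun k : Fin r => (j.castSucc : ℕ) ≤ (k : ℕ)) =
      insert j (Finset.univ.filter (fun k : Fin r => (j.succ : ℕ) ≤ (k : ℕ))) := by
    ext k
    simp only [Finset.mem_filter, Finset.mem_univ, true_and, Finset.mem_insert, Fin.ext_iff,
      Fin.val_castSucc, Fin.val_succ]
    omega
  rw [this, Finset.sum_insert]
  simp

lemma slWt_inj (r : ℕ) (d d' : Fin r → ℕ) (h : slWt r d = slWt r d') : d = d' := by
  funext j
  have h1 := congrFun h j.castSucc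
  have h2 := congrFun h j.succ
  simp only [slWt, partLift_step] at h1 h2
  have : (d j : ℚ) = d' j := by linarith
  exact_mod_cast this

lemma coeff_sum_alt (r : ℕ) (c : (Fin r → ℕ) →₀ ℕ) (μ : Fin r → ℕ) :
    (c.sum fun ν k => (k : ℤ) • altA r (slWt r ν + rhoA r)).coeff (slWt r μ + rhoA r) = c μ := by
  unfold Finsupp.sum
  simp only [AddMonoidAlgebra.coeff_sum, Finsupp.finset_sum_apply, AddMonoidAlgebra.coeff_smul,
    Finsupp.smul_apply, coeff_altA r _ _ (wt_anti r _) (wt_anti r _)]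
  rw [Finset.sum_eq_single μ]
  · simp
  · intro ν _ hν
    rw [if_neg, smul_zero]
    intro h
    exact hν (slWt_inj r _ _ (add_right_cancel h))
  · intro h
    simp [Finsupp.notMem_support_iff.1 h]

lemma decomp_unique (r : ℕ) (F : CharRing (r+1)) (c c' : (Fin r → ℕ) →₀ ℕ)
    (h : Decomp r F c) (h' : Decomp r F c') : c = c' := by
  ext μ
  unfold Decomp at h h'
  have := coeff_sum_alt r c μ
  rw [← h, h', coeff_sum_alt] at this
  exact_mod_cast this.symm

lemma alt_rho_ne (r : ℕ) : altA r (rhoA r) ≠ 0 := by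
  intro h
  have := coeff_altA r _ _ (rhoA_anti r) (rhoA_anti r)
  rw [h] at this
  simp at this

lemma L_zero (m : ℕ) : L m 0 0 0 0 0 0 = altA m (rhoA m) := by
  unfold L
  congr 1
  funext i
  simp [lam]

lemma six_cancel {k : ℕ} (x y : CharRing k) (h : (6:ℤ) • x = (6:ℤ) • y) : x = y := by
  ext v
  have h1 := congrArg (fun y : CharRing k => y.coeff v) h
  simp only [AddMonoidAlgebra.coeff_smul_apply, smul_eq_mul] at h1
  omega

lemma L_def (m : ℕ) (a1 a2 a3 b1 b2 b3 : ℚ) :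
    altA m (lam m a1 a2 a3 b1 b2 b3 + rhoA m) = L m a1 a2 a3 b1 b2 b3 := rfl

lemma f_eq {m : ℕ} (hm : 5 ≤ m) (f : CharRing (m+1)) (hf : IsCharA m (e m 1 + e m m) f) :
    f = PS m 1 * PS m (-1) - 1 := by
  unfold IsCharA at hf
  rw [w3 hm, ← L_zero] at hf
  change _ = L m 1 0 0 1 0 0 at hf
  have h := P11q hm
  apply mul_left_cancel₀ (alt_rho_ne m)
  rw [← L_zero]
  linear_combination hf - h

lemma e_ne (m : ℕ) (hm : 5 ≤ m) (d : Fin m → ℕ) (h : d ⟨0, by omega⟩ ≠ 1) : d ≠ e m 1 + e m m := by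
  intro h'
  apply h
  rw [h']
  simp [e]; omega

lemma e_ne' (m : ℕ) (hm : 5 ≤ m) (d : Fin m → ℕ) (h : d ⟨1, by omega⟩ ≠ 0) : d ≠ e m 1 + e m m := by
  intro h'
  apply h
  rw [h']
  simp [e]; omega

end MFPaper

open MFPaper

/-- **Lemma 4.6(ix).**  Let `X = A_m` with `m ≥ 5`.  Then the symmetric cube of the
adjoint module decomposes as
`S³(V_X(ω₁+ω_m)) = V(3ω₁+3ω_m) ⊕ V(2ω₁+2ω_m) ⊕ V(ω₁+ω_m)⊕² ⊕ V(ω₂+ω_{m-1})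
  ⊕ V(ω₃+ω_{m-2}) ⊕ V(ω₁+ω₂+ω_{m-1}+ω_m) ⊕ V(2ω₁+ω_{m-1}) ⊕ V(ω₂+2ω_m) ⊕ V(0)`
(for `m = 5` the term `V(ω₃+ω_{m-2})` is `V(2ω₃)`, as encoded automatically).
In particular `S³` is not multiplicity-free: it contains `V(ω₁+ω_m)` with multiplicity
exactly `2`.  Here `g`, the character of `S³V_X(ω₁+ω_m)`, is characterised by
`6g = f³ + 3f·f^{[2]} + 2f^{[3]}` where `f` is the character of the adjoint module. -/
theorem thm_sym_cube_adjoint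
    (m : ℕ) (hm : 5 ≤ m) :
    ∀ f, IsCharA m (e m 1 + e m m) f →
    ∀ g : CharRing (m + 1),
      (6 : ℤ) • g = f ^ 3 + 3 • (f * pw 2 f) + 2 • pw 3 f →
      Decomp m g
        (Finsupp.single (3 • e m 1 + 3 • e m m) 1
          + Finsupp.single (2 • e m 1 + 2 • e m m) 1
          + Finsupp.single (e m 1 + e m m) 2
          + Finsupp.single (e m 2 + e m (m - 1)) 1
          + Finsupp.single (e m 3 + e m (m - 2)) 1
          + Finsupp.single (e m 1 + e m 2 + e m (m - 1) + e m m) 1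
          + Finsupp.single (2 • e m 1 + e m (m - 1)) 1
          + Finsupp.single (e m 2 + 2 • e m m) 1
          + Finsupp.single 0 1)
      ∧ (∀ c : (Fin m → ℕ) →₀ ℕ, Decomp m g c → c (e m 1 + e m m) = 2) := by
  intro f hf g hg
  have hf' := f_eq hm f hf
  have hD : Decomp m g
        (Finsupp.single (3 • e m 1 + 3 • e m m) 1
          + Finsupp.single (2 • e m 1 + 2 • e m m) 1
          + Finsupp.single (e m 1 + e m m) 2
          + Finsupp.single (e m 2 + e m (m - 1)) 1
          + Finsupp.single (e m 3 + e m (m - 2)) 1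
          + Finsupp.single (e m 1 + e m 2 + e m (m - 1) + e m m) 1
          + Finsupp.single (2 • e m 1 + e m (m - 1)) 1
          + Finsupp.single (e m 2 + 2 • e m m) 1
          + Finsupp.single 0 1) := by
    unfold Decomp
    have hz : ∀ a : Fin m → ℕ, ((0 : ℕ) : ℤ) • altA m (slWt m a + rhoA m) = 0 := by simp
    have ha : ∀ (a : Fin m → ℕ) (b₁ b₂ : ℕ), ((b₁ + b₂ : ℕ) : ℤ) • altA m (slWt m a + rhoA m) =
        (b₁ : ℤ) • altA m (slWt m a + rhoA m) + (b₂ : ℤ) • altA m (slWt m a + rhoA m) := by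
      intro a b₁ b₂; push_cast; rw [add_smul]
    rw [Finsupp.sum_add_index' hz ha, Finsupp.sum_add_index' hz ha, Finsupp.sum_add_index' hz ha,
      Finsupp.sum_add_index' hz ha, Finsupp.sum_add_index' hz ha, Finsupp.sum_add_index' hz ha,
      Finsupp.sum_add_index' hz ha, Finsupp.sum_add_index' hz ha,
      Finsupp.sum_single_index (hz _), Finsupp.sum_single_index (hz _),
      Finsupp.sum_single_index (hz _), Finsupp.sum_single_index (hz _),
      Finsupp.sum_single_index (hz _), Finsupp.sum_single_index (hz _),
      Finsupp.sum_single_index (hz _), Finsupp.sum_single_index (hz _),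
      Finsupp.sum_single_index (hz _)]
    rw [w1 hm, w2 hm, w3 hm, w4 hm, w5 hm, w6 hm, w7 hm, w8 hm, w9 hm]
    simp only [L_def]
    apply six_cancel
    rw [← smul_mul_assoc, hg, hf', pw_sub, pw_sub, pw_mul, pw_mul, pw_one, pw_one, pw_PS, pw_PS,
      pw_PS, pw_PS, ← L_zero]
    have h := main_comp hm
    norm_num
    push_cast
    linear_combination h
  refine ⟨hD, fun c hc => ?_⟩
  rw [decomp_unique m g c _ hc hD]
  have n1 : (3 • e m 1 + 3 • e m m) ≠ e m 1 + e m m := e_ne m hm _ (by simp [e]; omega)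
  have n2 : (2 • e m 1 + 2 • e m m) ≠ e m 1 + e m m := e_ne m hm _ (by simp [e]; omega)
  have n4 : (e m 2 + e m (m - 1)) ≠ e m 1 + e m m := e_ne' m hm _ (by simp [e])
  have n5 : (e m 3 + e m (m - 2)) ≠ e m 1 + e m m := e_ne m hm _ (by simp [e]; omega)
  have n6 : (e m 1 + e m 2 + e m (m - 1) + e m m) ≠ e m 1 + e m m := e_ne' m hm _ (by simp [e])
  have n7 : (2 • e m 1 + e m (m - 1)) ≠ e m 1 + e m m := e_ne m hm _ (by simp [e]; omega)
  have n8 : (e m 2 + 2 • e m m) ≠ e m 1 + e m m := e_ne' m hm _ (by simp [e])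
  have n9 : (0 : Fin m → ℕ) ≠ e m 1 + e m m := e_ne m hm _ (by simp)
  simp only [Finsupp.add_apply, Finsupp.single_eq_same, Finsupp.single_eq_of_ne n1.symm,
    Finsupp.single_eq_of_ne n2.symm, Finsupp.single_eq_of_ne n4.symm,
    Finsupp.single_eq_of_ne n5.symm, Finsupp.single_eq_of_ne n6.symm,
    Finsupp.single_eq_of_ne n7.symm, Finsupp.single_eq_of_ne n8.symm,
    Finsupp.single_eq_of_ne n9.symm]
  norm_num
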